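/- arXiv:math/0410590 — 2 statements merged into one kernel-verified Lean document; each statement's English description precedes it below -/
import Mathlib

section
/- Let V = GF(qⁿ) regarded as an n-dimensional vector space over GF(q), let Γ(V) = {x ↦ axᵟ : a ∈ GF(qⁿ)ˣ, σ ∈ Gal(GF(qⁿ)/GF(q))} be the semilinear group of V, and let U = {x ↦ ax : a ∈ GF(qⁿ)ˣ} ≤ Γ(V). Suppose G is a subgroup of Γ(V) acting transitively on V \ {0}, and set H = G ∩ U. Then H is a normal cyclic subgroup of G and the conjugation action of G/H on H is faithful. -/
/-!
Every element of `Γ(L/K)` has the form `x ↦ a σ(x)`, and it conjugates multiplication by `c` to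
multiplication by `σ(c)`; normality of `H` is immediate, and `H` is cyclic because `Lˣ` is.

For faithfulness, suppose `g : x ↦ a σ(x)` in `G` centralizes `H` but `σ ≠ 1`, and let `F` be the
fixed field of `σ`. Then `H` consists of multiplications by elements of `Fˣ`. Every `a ∈ Lˣ` is
`g 1` for some `g ∈ G`, and elements of `G` with the same automorphism part differ by an element of
`H`, so `|L| - 1 ≤ n (|F| - 1)` where `n = [L : K]`. As `|F|² ≤ |L|` and `2ⁿ ≤ |L|`, this forces
`2ⁿ ≤ (n - 1)²`, which never happens for `n ≥ 1` (`card_contradiction`).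
-/


open scoped Classical

namespace ACFew

/-- The usual inner product of complex-valued class functions on a finite group. -/
noncomputable def charInner (G : Type*) [Group G] (φ ψ : G → ℂ) : ℂ :=
  (Nat.card G : ℂ)⁻¹ * ∑ᶠ g : G, φ g * (starRingEnd ℂ) (ψ g)

/-- `χ : G → ℂ` is a (complex) character of `G`:
the trace function of some finite-dimensional complex representation. -/
def IsChar (G : Type*) [Group G] (χ : G → ℂ) : Prop :=
  ∃ (n : ℕ) (ρ : Representation ℂ G (Fin n → ℂ)),
    ∀ g : G, χ g = LinearMap.trace ℂ (Fin n → ℂ) (ρ g)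

/-- `χ` is an irreducible character of a finite group: a character with `[χ, χ] = 1`. -/
def IsIrrChar (G : Type*) [Group G] (χ : G → ℂ) : Prop :=
  IsChar G χ ∧ charInner G χ χ = 1

/-- The kernel of a character, as a set. -/
def charKer {G : Type*} [Group G] (χ : G → ℂ) : Set G := {g | χ g = χ 1}

/-- A character is faithful if its kernel is trivial. -/
def IsFaithfulChar {G : Type*} [Group G] (χ : G → ℂ) : Prop := charKer χ = {1}

/-- Restriction of a class function to a subgroup. -/
def charRes {G : Type*} [Group G] (H : Subgroup G) (χ : G → ℂ) : ↥H → ℂ := fun h => χ (h : G)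

/-- `E/Z` is a chief factor of `G`: both are normal in `G`, `Z < E`,
and there is no normal subgroup of `G` properly between them. -/
def IsChiefFactor {G : Type*} [Group G] (Z E : Subgroup G) : Prop :=
  Z.Normal ∧ E.Normal ∧ Z < E ∧
    ∀ N : Subgroup G, N.Normal → Z ≤ N → N ≤ E → N = Z ∨ N = E

/-- The Fitting subgroup of a group: the join of all normal nilpotent subgroups. -/
def fittingSubgroup (G : Type*) [Group G] : Subgroup G :=
  ⨆ (H : Subgroup G) (_ : H.Normal ∧ Group.IsNilpotent ↥H), H

theorem map_conj_eq_of_normal {G : Type*} [Group G] (H : Subgroup G) (hH : H.Normal) (g : G) :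
    H.map (MulAut.conj g).toMonoidHom = H := by
  ext x
  constructor
  · rintro ⟨y, hy, rfl⟩
    exact hH.conj_mem y hy g
  · intro hx
    exact ⟨g⁻¹ * x * g, by simpa using hH.conj_mem x hx g⁻¹, by simp [MulAut.conj]; group⟩

instance fittingSubgroup_normal (G : Type*) [Group G] : (fittingSubgroup G).Normal := by
  constructor
  intro n hn g
  have hmap : (fittingSubgroup G).map (MulAut.conj g).toMonoidHom = fittingSubgroup G := by
    unfold fittingSubgroup
    rw [Subgroup.map_iSup]
    refine iSup_congr fun H => ?_
    rw [Subgroup.map_iSup]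
    exact iSup_congr fun h => map_conj_eq_of_normal H h.1 g
  have : (MulAut.conj g).toMonoidHom n ∈ (fittingSubgroup G).map (MulAut.conj g).toMonoidHom :=
    Subgroup.mem_map_of_mem _ hn
  rw [hmap] at this
  simpa [MulAut.conj] using this

/-- `F₂(G)`: the preimage in `G` of the Fitting subgroup of `G / F(G)`. -/
def fitting2 (G : Type*) [Group G] : Subgroup G :=
  (fittingSubgroup (G ⧸ fittingSubgroup G)).comap (QuotientGroup.mk' (fittingSubgroup G))

instance fitting2_normal (G : Type*) [Group G] : (fitting2 G).Normal :=
  Subgroup.normal_comap _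

/-- An extraspecial 2-group: a 2-group whose center, derived subgroup and Frattini
subgroup coincide and have order 2. -/
def IsExtraspecial2Group (E : Type*) [Group E] : Prop :=
  IsPGroup 2 E ∧ Subgroup.center E = commutator E ∧ Subgroup.center E = frattini E ∧
    Nat.card (Subgroup.center E) = 2

/-- `H` is the central product of the quaternion group `Q₈` and the dihedral group of
order 8: it is generated by elementwise-commuting copies of `Q₈` and `D₈` which intersect
in the center of `H`. -/
def IsCentralProductQ8D8 (H : Type*) [Group H] : Prop :=
  ∃ A B : Subgroup H,
    Nonempty (A ≃* QuaternionGroup 2) ∧ Nonempty (B ≃* DihedralGroup 4) ∧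
    (∀ a ∈ A, ∀ b ∈ B, a * b = b * a) ∧ A ⊔ B = ⊤ ∧ A ⊓ B = Subgroup.center H

/-- The generators of the presentation of `G̃L(2,3)`. -/
def gltX : FreeGroup (Fin 3) := FreeGroup.of 0
def gltY : FreeGroup (Fin 3) := FreeGroup.of 1
def gltZ : FreeGroup (Fin 3) := FreeGroup.of 2

/-- The relators `x⁸ = 1`, `y² = x⁴`, `z³ = 1`, `xʸ = x⁻¹`, `zˣ = x²yz⁻¹`, `(x²)ᶻ = y`
defining `G̃L(2,3)`. -/
def gltRels : Set (FreeGroup (Fin 3)) :=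
  { gltX ^ 8,
    gltY ^ 2 * (gltX ^ 4)⁻¹,
    gltZ ^ 3,
    (gltY⁻¹ * gltX * gltY) * gltX,
    (gltX⁻¹ * gltZ * gltX) * (gltX ^ 2 * gltY * gltZ⁻¹)⁻¹,
    (gltZ⁻¹ * gltX ^ 2 * gltZ) * gltY⁻¹ }

/-- The group `G̃L(2,3)`, given by the presentation
`⟨x, y, z ∣ x⁸ = 1, y² = x⁴, z³ = 1, xʸ = x⁻¹, zˣ = x²yz⁻¹, (x²)ᶻ = y⟩`. -/
abbrev GLtilde23 : Type := PresentedGroup gltRels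

/-- A finite group is supersolvable if it has a normal series with cyclic factors,
all of whose terms are normal in `G`. -/
def IsSupersolvable (G : Type*) [Group G] : Prop :=
  ∃ (n : ℕ) (c : Fin (n + 1) → Subgroup G),
    c 0 = ⊥ ∧ c (Fin.last n) = ⊤ ∧
    (∀ i : Fin n, c i.castSucc ≤ c i.succ) ∧
    (∀ i, (c i).Normal) ∧
    ∀ i : Fin n, ∃ x : G, c i.succ ≤ c i.castSucc ⊔ Subgroup.closure {x}

/-- The stabilizer in `G` of a class function `θ` on a subgroup `K`, as a set. -/
def charStabilizer {G : Type*} [Group G] (K : Subgroup G) (θ : ↥K → ℂ) : Set G :=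
  {g : G | ∀ (k : G) (hk : k ∈ K) (hk' : g * k * g⁻¹ ∈ K), θ ⟨g * k * g⁻¹, hk'⟩ = θ ⟨k, hk⟩}

/-- The subgroup of `Equiv.Perm L` given by multiplication by nonzero field elements. -/
def unitsMulGroup (L : Type*) [Field L] : Subgroup (Equiv.Perm L) :=
  (MulAction.toPermHom Lˣ L).range

/-- The semilinear group `Γ(L/K)`: the group of permutations of `L` of the form
`x ↦ a • σ x` with `a ∈ Lˣ` and `σ ∈ Gal(L/K)`; equivalently, the subgroup of
`Equiv.Perm L` generated by multiplications by units and `K`-algebra automorphisms. -/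
def semilinearGroup (K L : Type*) [Field K] [Field L] [Algebra K L] : Subgroup (Equiv.Perm L) :=
  unitsMulGroup L ⊔ Subgroup.closure {π : Equiv.Perm L | ∃ σ : L ≃ₐ[K] L, π = σ.toEquiv}

end ACFew

namespace ACFew

theorem mem_unitsMulGroup_iff {L : Type*} [Field L] {g : Equiv.Perm L} :
    g ∈ unitsMulGroup L ↔ ∃ a : Lˣ, ∀ x, g x = a * x := by
  constructor
  · rintro ⟨a, rfl⟩
    exact ⟨a, fun x => rfl⟩
  · rintro ⟨a, ha⟩
    exact ⟨a, Equiv.ext fun x => (ha x).symm⟩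

theorem exists_of_mem_semilinearGroup {K L : Type*} [Field K] [Field L] [Algebra K L]
    {g : Equiv.Perm L} (hg : g ∈ semilinearGroup K L) :
    ∃ (a : Lˣ) (σ : L ≃ₐ[K] L), ∀ x, g x = a * σ x := by
  let S : Subgroup (Equiv.Perm L) :=
    { carrier := {g | ∃ (a : Lˣ) (σ : L ≃ₐ[K] L), ∀ x, g x = a * σ x}
      one_mem' := ⟨1, 1, fun x => by simp⟩
      mul_mem' := by
        rintro g h ⟨a, σ, hg⟩ ⟨b, τ, hh⟩
        refine ⟨a * Units.map (σ : L →* L) b, σ * τ, fun x => ?_⟩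
        simp [hg, hh, mul_assoc]
      inv_mem' := by
        rintro g ⟨a, σ, hg⟩
        refine ⟨Units.map (σ.symm : L →* L) a⁻¹, σ.symm, fun x => ?_⟩
        rw [Equiv.Perm.inv_eq_iff_eq, hg]
        simp }
  have hle : semilinearGroup K L ≤ S := by
    refine sup_le ?_ ((Subgroup.closure_le _).2 ?_)
    · intro g hg
      obtain ⟨a, ha⟩ := mem_unitsMulGroup_iff.1 hg
      exact ⟨a, 1, fun x => by simpa using ha x⟩
    · rintro g ⟨σ, rfl⟩
      exact ⟨1, σ, fun x => by simp⟩
  exact hle hg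

theorem sq_lt_two_pow (n : ℕ) : n ^ 2 < 2 ^ (n + 1) := by
  induction n with
  | zero => norm_num
  | succ k ih =>
    rcases Nat.lt_or_ge k 3 with h | h
    · interval_cases k <;> norm_num
    · rw [pow_succ 2 (k + 1)]
      nlinarith

/-- The numerical heart: with `s = √N`, the bounds `r ≤ s` and `s² - 1 ≤ n (r - 1)` give
`s + 1 ≤ n`, that is `N ≤ (n - 1)²`, against `2ⁿ ≤ N`. -/
theorem card_contradiction {N r n : ℕ} (h2 : 2 ≤ N) (hr : r ^ 2 ≤ N) (hn : 2 ^ n ≤ N)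
    (h : N ≤ n * (r - 1) + 1) : False := by
  obtain ⟨k, rfl⟩ : ∃ k, n = k + 1 := by
    cases n with
    | zero => omega
    | succ k => exact ⟨k, rfl⟩
  obtain ⟨t, rfl⟩ : ∃ t, r = t + 1 := by
    cases r with
    | zero => simp at h; omega
    | succ t => exact ⟨t, rfl⟩
  have hk : k ^ 2 < N := (sq_lt_two_pow k).trans_le hn
  rw [Nat.add_sub_cancel] at h
  have h' : (N : ℝ) ≤ (k + 1) * t + 1 := by exact_mod_cast h
  have hs : √(N : ℝ) ^ 2 = N := Real.sq_sqrt (Nat.cast_nonneg N)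
  have hr' : (t : ℝ) + 1 ≤ √N := Real.le_sqrt_of_sq_le (by exact_mod_cast hr)
  have hk' : (k : ℝ) < √N := Real.lt_sqrt_of_sq_lt (by exact_mod_cast hk)
  have h1 : 1 < √(N : ℝ) := Real.lt_sqrt_of_sq_lt (by rw [one_pow]; exact_mod_cast h2)
  have hk0 : (0 : ℝ) ≤ k := Nat.cast_nonneg k
  have h3 : ((k : ℝ) + 1) * t ≤ (k + 1) * (√N - 1) :=
    mul_le_mul_of_nonneg_left (by linarith) (by linarith)
  nlinarith [mul_pos (sub_pos.2 h1) (sub_pos.2 hk')]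

/-- A proper subfield of a finite field has at most `√|L|` elements. -/
theorem card_subfield_sq_le {L : Type*} [Field L] [Finite L] (F : Subfield L) {x : L}
    (hx : x ∉ F) : Nat.card F ^ 2 ≤ Nat.card L := by
  have : Module.Finite F L := Module.Finite.of_finite
  rw [Module.natCard_eq_pow_finrank (K := F) (V := L)]
  refine Nat.pow_le_pow_right Nat.card_pos ?_
  by_contra hlt
  have h1 : Module.finrank F L = 1 := by
    have := Module.finrank_pos (R := F) (M := L)
    omega
  obtain ⟨y, rfl⟩ := (Algebra.mem_bot).1
    ((Subalgebra.bot_eq_top_of_finrank_eq_one h1).symm ▸ Algebra.mem_top : x ∈ (⊥ : Subalgebra F L))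
  exact hx y.2

/-- The counting step: if all multiplications in a transitive `G ≤ Γ(L/K)` are by elements of a
subfield `F`, then `|Lˣ| ≤ |Gal(L/K)| |Fˣ|`. -/
theorem card_units_le {K L : Type*} [Field K] [Field L] [Algebra K L] [Finite L]
    (G : Subgroup (Equiv.Perm L)) (hG : G ≤ semilinearGroup K L)
    (htrans : ∀ x y : L, x ≠ 0 → y ≠ 0 → ∃ g ∈ G, g x = y) (F : Subfield L)
    (hF : ∀ c : Lˣ, MulAction.toPermHom Lˣ L c ∈ G → (c : L) ∈ F) :
    Nat.card Lˣ ≤ Nat.card (L ≃ₐ[K] L) * Nat.card Fˣ := by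
  have hex : ∀ a : Lˣ, ∃ σ : L ≃ₐ[K] L, ∃ g ∈ G, ∀ x, g x = a * σ x := by
    intro a
    obtain ⟨g, hg, hga⟩ := htrans 1 a one_ne_zero a.ne_zero
    obtain ⟨b, σ, hb⟩ := exists_of_mem_semilinearGroup (hG hg)
    have : b = a := Units.ext (by rw [← hga, hb]; simp)
    exact ⟨σ, g, hg, this ▸ hb⟩
  choose s g hg hgs using hex
  -- A chosen base point `p σ` of each nonempty fibre of `s`.
  let p : (L ≃ₐ[K] L) → Lˣ := Function.invFun s
  have hp : ∀ a, s (p (s a)) = s a := fun a => Function.invFun_eq ⟨a, rfl⟩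
  have hmem : ∀ a : Lˣ, ((a * (p (s a))⁻¹ : Lˣ) : L) ∈ F := by
    intro a
    apply hF
    have : MulAction.toPermHom Lˣ L (a * (p (s a))⁻¹) = g a * (g (p (s a)))⁻¹ := by
      rw [eq_mul_inv_iff_mul_eq]
      ext x
      simp [hgs, hp, Units.smul_def, mul_assoc]
    rw [this]
    exact G.mul_mem (hg _) (G.inv_mem (hg _))
  let f : Lˣ → (L ≃ₐ[K] L) × Fˣ := fun a =>
    (s a, Units.mk0 ⟨_, hmem a⟩ fun h => (a * (p (s a))⁻¹).ne_zero (congrArg Subtype.val h))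
  have hf : Function.Injective f := by
    intro a b hab
    have h1 : s a = s b := congrArg Prod.fst hab
    have h2 : ((a * (p (s a))⁻¹ : Lˣ) : L) = ((b * (p (s b))⁻¹ : Lˣ) : L) :=
      congrArg (fun z => (((z.2 : Fˣ) : F) : L)) hab
    have h3 := Units.ext h2
    rw [h1] at h3
    exact mul_right_cancel h3
  have : Finite (L ≃ₐ[K] L) := DFunLike.finite _
  rw [← Nat.card_prod]
  exact Nat.card_le_card_of_injective f hf

/-- If `G` is a subgroup of the semilinear group `Γ(L/K)` of a finite field extension
`L/K` acting transitively on `L \ {0}`, and `H = G ∩ U` where `U` consists of the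
multiplications by units, then `H` is a normal cyclic subgroup of `G` and the conjugation
action of `G/H` on `H` is faithful (i.e. only elements of `H` centralize `H` in `G`). -/
theorem semilinear_transitive_normal_cyclic {K L : Type*} [Field K] [Field L] [Algebra K L]
    [Finite L]
    (G : Subgroup (Equiv.Perm L))
    (hG : G ≤ semilinearGroup K L)
    (htrans : ∀ x y : L, x ≠ 0 → y ≠ 0 → ∃ g ∈ G, g x = y) :
    IsCyclic ↥(G ⊓ unitsMulGroup L) ∧
    (∀ g ∈ G, ∀ h ∈ G ⊓ unitsMulGroup L, g * h * g⁻¹ ∈ G ⊓ unitsMulGroup L) ∧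
    (∀ g ∈ G, (∀ h ∈ G ⊓ unitsMulGroup L, g * h * g⁻¹ = h) → g ∈ G ⊓ unitsMulGroup L) := by
  have hconj : ∀ (g : Equiv.Perm L) (a : Lˣ) (σ : L ≃ₐ[K] L) (h : Equiv.Perm L) (c : Lˣ),
      (∀ x, g x = a * σ x) → (∀ x, h x = c * x) → ∀ x, (g * h * g⁻¹) x = σ c * x := by
    intro g a σ h c hg hh x
    obtain ⟨y, rfl⟩ := g.surjective x
    have hy : g⁻¹ (g y) = y := g.symm_apply_apply y
    rw [Equiv.Perm.mul_apply, Equiv.Perm.mul_apply, hy]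
    simp [hg, hh, mul_left_comm]
  refine ⟨?_, ?_, ?_⟩
  · have : IsCyclic (unitsMulGroup L) :=
      isCyclic_of_surjective (MulAction.toPermHom Lˣ L).rangeRestrict
        (MulAction.toPermHom Lˣ L).rangeRestrict_surjective
    exact isCyclic_of_injective (Subgroup.inclusion (inf_le_right : G ⊓ unitsMulGroup L ≤ _))
      (Subgroup.inclusion_injective _)
  · rintro g hg h ⟨hhG, hhU⟩
    obtain ⟨a, σ, ha⟩ := exists_of_mem_semilinearGroup (hG hg)
    obtain ⟨c, hc⟩ := mem_unitsMulGroup_iff.1 hhU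
    exact ⟨G.mul_mem (G.mul_mem hg hhG) (G.inv_mem hg), mem_unitsMulGroup_iff.2
      ⟨Units.map (σ : L →* L) c, fun x => by simpa using hconj g a σ h c ha hc x⟩⟩
  · intro g hg hcent
    obtain ⟨a, σ, ha⟩ := exists_of_mem_semilinearGroup (hG hg)
    refine ⟨hg, mem_unitsMulGroup_iff.2 ⟨a, fun x => ?_⟩⟩
    suffices hσ : σ x = x by rw [ha, hσ]
    by_contra hx
    let F : Subfield L := RingHom.eqLocusField (σ : L →+* L) (RingHom.id L)
    have hF : ∀ c : Lˣ, MulAction.toPermHom Lˣ L c ∈ G → (c : L) ∈ F := by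
      intro c hc
      have h1 := hconj g a σ _ c ha (fun x => rfl : ∀ x, MulAction.toPermHom Lˣ L c x = c * x) 1
      rw [hcent _ ⟨hc, c, rfl⟩] at h1
      change σ c = c
      simpa [Units.smul_def] using h1.symm
    have hcard := card_units_le G hG htrans F hF
    have : Module.Finite K L := Module.Finite.of_finite
    have : Finite K := Finite.of_injective _ (algebraMap K L).injective
    have haut : Nat.card (L ≃ₐ[K] L) ≤ Module.finrank K L := by
      rw [Nat.card_eq_fintype_card]
      exact AlgEquiv.card_le
    rw [Nat.card_units, Nat.card_units] at hcard
    have hL : 2 ^ Module.finrank K L ≤ Nat.card L := by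
      rw [Module.natCard_eq_pow_finrank (K := K) (V := L)]
      exact Nat.pow_le_pow_left (Finite.one_lt_card (α := K)) _
    refine card_contradiction (Finite.one_lt_card (α := L)) (card_subfield_sq_le F (x := x) hx) hL ?_
    have := Nat.mul_le_mul_right (Nat.card F - 1) haut
    omega

end ACFew
end

section
/- Let G be a finite nilpotent group and χ ∈ Irr(G) a faithful character with χχ̄ = 1_G + m₁α₁ + m₂α₂, where α₁, α₂ ∈ Irr(G) are distinct non-principal characters and m₁, m₂ are strictly positive integers. Then m₁ = m₂ = 1, χ(1) = 2, and G/Z(G) is isomorphic to a dihedral 2-group. -/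
/-!
Write `Z = Z(G)`, `d = χ(1)`, `a = m₁ α₁(1)`, `b = m₂ α₂(1)`, so that `d² = 1 + a + b`, and let `ρ`
afford `χ`. As `|χ| = d` on `Z`, the center lies in the kernels of `α₁` and `α₂`. Since `d ≠ 1`, `G`
is not abelian (`center_ne_top`), and nilpotency gives `x ∉ Z` with all commutators `[g, x]` in `Z`.
By Schur's lemma (`exists_scalar`) `ρ [g, x]` is a scalar `ε g`, and `ε` is a nontrivial linear
character, so `χ(x) = 0`; moreover `x` acts in `α₁`, `α₂` by scalars `u`, `v` of modulus one, with
`1 + a u + b v = 0`.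

If `x²` were not central, the same relation would hold for `u²` and `v²`, which is impossible
(`no_unit_relations`). So `x² ∈ Z`, whence `u, v = ±1`, `ε` is a sign character and `ε χ = χ`
(`second_center_analysis`). The relation forces `{u, v} = {1, -1}`, say `v = -1`. Now `ε` occurs in
`χ χ̄` with multiplicity `[χ, ε χ] = 1` and is trivial at `x`, so `ε = α₁` and `m₁ = a = 1`,
`b = 2`, `d = 2`. Finally `m₂ = 2` would make `α₂` linear and `[χ, α₂ χ] ≥ 2`, while both characters
are irreducible (`degrees_of_sign`).

In degree two, `ker ε / Z` is cyclic and inverted by any element outside `ker ε`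
(`quotient_dihedral`); in a nilpotent group an inverted element has `2`-power order, and the quotient
is a dihedral `2`-group (`dihedral_of_nilpotent`).

Multiplicities are handled through `charInner_eq_finrank`, which identifies `[σ, ρ]` with the
dimension of the space of intertwining maps, and `charInner_unit`.
-/

open scoped Classical

namespace ACFew

section Auxiliary

open Representation
open scoped ComplexOrder commutatorElement

/-! ### Characters and their inner product -/

section
variable {G : Type*} [Group G] {V W : Type*} [AddCommGroup V] [Module ℂ V]
  [FiniteDimensional ℂ V] [AddCommGroup W] [Module ℂ W] [FiniteDimensional ℂ W]

/-- The averaged form `∑ h, (M h)ᴴ * M h` is positive definite and invariant, so `M g⁻¹` is similar to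
`(M g)ᴴ`. -/
theorem trace_conj_of_matrix [Finite G] {n : ℕ} (M : G →* Matrix (Fin n) (Fin n) ℂ) (g : G) :
    (M g⁻¹).trace = (starRingEnd ℂ) (M g).trace := by
  classical
  have := Fintype.ofFinite G
  set H : Matrix (Fin n) (Fin n) ℂ := ∑ h : G, (M h).conjTranspose * M h with hH
  have hinv : (M g).conjTranspose * H * M g = H := by
    rw [hH, Finset.mul_sum, Finset.sum_mul]
    rw [← Equiv.sum_comp (Equiv.mulRight g) (fun h => (M h).conjTranspose * M h)]
    refine Finset.sum_congr rfl fun h _ => ?_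
    simp [Matrix.conjTranspose_mul, Matrix.mul_assoc]
  have hpos : H.PosDef := by
    have h1 : H = 1 + ∑ h ∈ Finset.univ.erase (1 : G), (M h).conjTranspose * M h := by
      rw [hH, ← Finset.add_sum_erase _ _ (Finset.mem_univ (1 : G))]
      simp
    rw [h1]
    exact Matrix.PosDef.one.add_posSemidef
      (Matrix.posSemidef_sum _ fun h _ => Matrix.posSemidef_conjTranspose_mul_self _)
  have hu : IsUnit H.det := (Matrix.isUnit_iff_isUnit_det _).1 hpos.isUnit
  have h3 : (M g).conjTranspose * H = H * M g⁻¹ := by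
    calc (M g).conjTranspose * H = (M g).conjTranspose * H * (M g * M g⁻¹) := by
          rw [← map_mul]; simp
      _ = H * M g⁻¹ := by rw [← Matrix.mul_assoc, hinv]
  have h4 : M g⁻¹ = H⁻¹ * ((M g).conjTranspose * H) := by
    rw [h3, Matrix.nonsing_inv_mul_cancel_left _ _ hu]
  rw [h4, Matrix.trace_mul_comm, Matrix.mul_assoc, Matrix.mul_nonsing_inv _ hu, Matrix.mul_one,
    Matrix.trace_conjTranspose]
  rfl

theorem character_inv [Finite G] (ρ : Representation ℂ G V) (g : G) :
    ρ.character g⁻¹ = (starRingEnd ℂ) (ρ.character g) := by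
  let b := Module.finBasis ℂ V
  have := trace_conj_of_matrix
    (((LinearMap.toMatrixAlgEquiv b).toAlgHom.toRingHom.toMonoidHom).comp ρ) g
  simpa [character, LinearMap.trace_eq_matrix_trace ℂ b, LinearMap.toMatrixAlgEquiv] using this

/-- `[σ, ρ]` is the dimension of `Hom_G(ρ, σ)`; in particular it is a natural number. -/
theorem charInner_eq_finrank [Finite G] (ρ : Representation ℂ G V) (σ : Representation ℂ G W) :
    charInner G σ.character ρ.character = Module.finrank ℂ (IntertwiningMap ρ σ) := by
  have := Fintype.ofFinite G
  have : Invertible (Nat.card G : ℂ) := invertibleOfNonzero (by simp)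
  rw [← card_inv_mul_sum_char_mul_char_eq_finrank, charInner, finsum_eq_sum_of_fintype]
  simp [character_inv]

/-- Schur's lemma, for irreducibility expressed by `[χ, χ] = 1`. -/
theorem exists_scalar [Finite G] (ρ : Representation ℂ G V)
    (h : charInner G ρ.character ρ.character = 1) (f : V →ₗ[ℂ] V)
    (hf : ∀ g, f ∘ₗ ρ g = ρ g ∘ₗ f) : ∃ c : ℂ, f = c • (1 : V →ₗ[ℂ] V) := by
  rw [charInner_eq_finrank] at h
  have h1 : Module.finrank ℂ (IntertwiningMap ρ ρ) = 1 := by exact_mod_cast h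
  let F : IntertwiningMap ρ ρ := ⟨f, hf⟩
  let I : IntertwiningMap ρ ρ := IntertwiningMap.id ρ
  have hI : I ≠ 0 := by
    intro h0
    have hV : ∀ v : V, v = 0 := fun v => by
      have := congrArg (fun T : IntertwiningMap ρ ρ => T v) h0
      simpa [I] using this
    have : Subsingleton (IntertwiningMap ρ ρ) :=
      ⟨fun A B => by ext v; rw [hV (A.toLinearMap _), hV (B.toLinearMap _)]⟩
    rw [Module.finrank_zero_of_subsingleton] at h1
    exact absurd h1 (by norm_num)
  obtain ⟨c, hc⟩ := (finrank_eq_one_iff_of_nonzero' I hI).1 h1 F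
  refine ⟨c, ?_⟩
  ext v
  have := congrArg (fun T : IntertwiningMap ρ ρ => T v) hc
  simpa [I, F] using this.symm

theorem charInner_self [Finite G] (φ : G → ℂ) :
    charInner G φ φ = (((Nat.card G : ℝ)⁻¹ * ∑ᶠ g, ‖φ g‖ ^ 2 : ℝ) : ℂ) := by
  have := Fintype.ofFinite G
  rw [charInner, finsum_eq_sum_of_fintype, finsum_eq_sum_of_fintype]
  push_cast
  simp [Complex.mul_conj, Complex.normSq_eq_norm_sq]

/-- Expanding `‖φ - ψ‖²` for two unit vectors whose inner product is an integer: that integer is at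
most `1`, and equals `1` only if `φ = ψ`. -/
theorem charInner_unit [Finite G] (φ ψ : G → ℂ) (hφ : charInner G φ φ = 1)
    (hψ : charInner G ψ ψ = 1) (k : ℕ) (hk : charInner G φ ψ = k) :
    k ≤ 1 ∧ (k = 1 → φ = ψ) := by
  have := Fintype.ofFinite G
  have hk' : charInner G ψ φ = k := by
    have : charInner G ψ φ = (starRingEnd ℂ) (charInner G φ ψ) := by
      simp [charInner, finsum_eq_sum_of_fintype, map_sum, mul_comm]
    rw [this, hk]; simp
  have h1 : charInner G (φ - ψ) (φ - ψ) = ((2 - 2 * k : ℝ) : ℂ) := by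
    have : charInner G (φ - ψ) (φ - ψ) =
        charInner G φ φ - charInner G φ ψ - charInner G ψ φ + charInner G ψ ψ := by
      simp only [charInner, finsum_eq_sum_of_fintype, ← mul_sub, ← mul_add,
        ← Finset.sum_sub_distrib, ← Finset.sum_add_distrib]
      congr 1
      refine Finset.sum_congr rfl fun g _ => ?_
      simp only [Pi.sub_apply, map_sub]
      ring
    rw [this, hφ, hψ, hk, hk']; push_cast; ring
  rw [charInner_self, Complex.ofReal_inj, finsum_eq_sum_of_fintype] at h1
  have hc : (0 : ℝ) < (Nat.card G : ℝ)⁻¹ := by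
    have := Nat.card_pos (α := G)
    positivity
  have hnn : 0 ≤ ∑ g : G, ‖(φ - ψ) g‖ ^ 2 := Finset.sum_nonneg fun _ _ => by positivity
  constructor
  · have : (0 : ℝ) ≤ 2 - 2 * k := h1 ▸ by positivity
    have : (k : ℝ) ≤ 1 := by linarith
    exact_mod_cast this
  · rintro rfl
    have h2 : ∑ g : G, ‖(φ - ψ) g‖ ^ 2 = 0 := by
      rcases mul_eq_zero.1 (h1.trans (by norm_num)) with h | h
      · exact absurd h hc.ne'
      · exact h
    rw [Finset.sum_eq_zero_iff_of_nonneg fun _ _ => by positivity] at h2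
    funext g
    have := h2 g (Finset.mem_univ g)
    simpa [sub_eq_zero] using this

omit [FiniteDimensional ℂ V] in
/-- Such a scalar is a root of unity, since `g` has finite order. -/
theorem norm_scalar [Finite G] [Nontrivial V] (ρ : Representation ℂ G V) (g : G) (c : ℂ)
    (h : ρ g = c • (1 : V →ₗ[ℂ] V)) : ‖c‖ = 1 := by
  have h1 : (c ^ orderOf g) • (1 : Module.End ℂ V) = 1 := by
    have : ρ (g ^ orderOf g) = (c • (1 : Module.End ℂ V)) ^ orderOf g := by rw [map_pow, h]
    rw [pow_orderOf_eq_one, map_one, smul_pow, one_pow] at this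
    exact this.symm
  have h2 : c ^ orderOf g = 1 := by
    obtain ⟨v, hv⟩ := exists_ne (0 : V)
    have := congrArg (fun T : Module.End ℂ V => T v) h1
    simp only [LinearMap.smul_apply, Module.End.one_apply] at this
    exact smul_left_injective ℂ hv (by simpa using this)
  exact Complex.norm_eq_one_of_pow_eq_one h2 (orderOf_pos g).ne'

/-- The one-dimensional representation attached to a linear character. -/
noncomputable def linRep (ε : G →* ℂ) : Representation ℂ G ℂ :=
  ((algebraMap ℂ (Module.End ℂ ℂ)) : ℂ →* Module.End ℂ ℂ).comp ε

theorem linRep_character (ε : G →* ℂ) (g : G) : (linRep ε).character g = ε g := by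
  have : linRep ε g = ε g • (1 : Module.End ℂ ℂ) := by
    simp [linRep, Algebra.algebraMap_eq_smul_one]
  rw [character, this]
  simp [LinearMap.trace_one]

omit [FiniteDimensional ℂ V] in
/-- If conjugating `x` only multiplies it by central elements, which act by scalars, then these
scalars form a linear character. -/
theorem exists_sign [Nontrivial V] (ρ : Representation ℂ G V)
    (hs : ∀ z ∈ Subgroup.center G, ∃ c : ℂ, ρ z = c • (1 : V →ₗ[ℂ] V)) (x : G)
    (hx : ∀ g, g * x * g⁻¹ * x⁻¹ ∈ Subgroup.center G) :
    ∃ ε : G →* ℂ, ∀ g, ρ (g * x * g⁻¹) = ε g • ρ x := by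
  choose c hc using fun g => hs _ (hx g)
  have key : ∀ g, ρ (g * x * g⁻¹) = c g • ρ x := fun g => by
    have : ρ (g * x * g⁻¹) = ρ (g * x * g⁻¹ * x⁻¹) * ρ x := by rw [← map_mul]; simp
    rw [this, hc]; ext v; simp
  have hne : ρ x ≠ 0 := fun h => by
    have : ρ x * ρ x⁻¹ = 1 := by rw [← map_mul]; simp
    rw [h, zero_mul] at this
    exact zero_ne_one this
  have inj : ∀ a b : ℂ, a • ρ x = b • ρ x → a = b := fun a b h => smul_left_injective ℂ hne h
  refine ⟨⟨⟨c, inj _ _ ?_⟩, fun g h => inj _ _ ?_⟩, key⟩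
  · rw [← key]; simp
  · rw [← key]
    have : ρ (g * h * x * (g * h)⁻¹) = ρ g * ρ (h * x * h⁻¹) * ρ g⁻¹ := by
      rw [← map_mul, ← map_mul]; congr 1; group
    rw [this, key h, mul_smul_comm, smul_mul_assoc, ← map_mul, ← map_mul, key g, smul_smul,
      mul_comm]
end

/-! ### Relations between complex numbers of modulus one -/

/-- The only numerical possibility excluded by the two relations would be cube roots of unity with
`a = b = 1`, and then `1 + a + b = 3` is not a square. -/
theorem no_unit_relations (a b d : ℕ) (ha : 0 < a) (hb : 0 < b) (hd : d ^ 2 = 1 + a + b)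
    (u v : ℂ) (hu : ‖u‖ = 1) (hv : ‖v‖ = 1) (h1 : 1 + a * u + b * v = 0)
    (h2 : 1 + a * u ^ 2 + b * v ^ 2 = 0) : False := by
  have hu' : u.re ^ 2 + u.im ^ 2 = 1 := by
    have := Complex.sq_norm u
    rw [hu, Complex.normSq_apply] at this; nlinarith
  have hv' : v.re ^ 2 + v.im ^ 2 = 1 := by
    have := Complex.sq_norm v
    rw [hv, Complex.normSq_apply] at this; nlinarith
  have e1 := congrArg Complex.re h1
  have e2 := congrArg Complex.im h1
  have e3 := congrArg Complex.re h2
  have e4 := congrArg Complex.im h2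
  simp [pow_two] at e1 e2 e3 e4
  generalize u.re = p at *
  generalize u.im = q at *
  generalize v.re = r at *
  generalize v.im = s at *
  have ha' : (1 : ℝ) ≤ a := by exact_mod_cast ha
  have hb' : (1 : ℝ) ≤ b := by exact_mod_cast hb
  -- comparing moduli in `b v = -(1 + a u)`, in the relation and in its square
  have f1 : (b : ℝ) ^ 2 = 1 + a ^ 2 + 2 * a * p := by
    have g1 : (b : ℝ) * r = -(1 + a * p) := by linarith
    have g2 : (b : ℝ) * s = -(a * q) := by linarith
    calc (b : ℝ) ^ 2 = (b * r) ^ 2 + (b * s) ^ 2 := by linear_combination -(b : ℝ) ^ 2 * hv'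
      _ = _ := by rw [g1, g2]; linear_combination (a : ℝ) ^ 2 * hu'
  have f2 : (a : ℝ) ^ 2 = 1 + b ^ 2 + 2 * b * r := by
    have g1 : (a : ℝ) * p = -(1 + b * r) := by linarith
    have g2 : (a : ℝ) * q = -(b * s) := by linarith
    calc (a : ℝ) ^ 2 = (a * p) ^ 2 + (a * q) ^ 2 := by linear_combination -(a : ℝ) ^ 2 * hu'
      _ = _ := by rw [g1, g2]; linear_combination (b : ℝ) ^ 2 * hv'
  have hu2 : (p * p - q * q) ^ 2 + (p * q + q * p) ^ 2 = 1 := by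
    linear_combination (p ^ 2 + q ^ 2 + 1) * hu'
  have hv2 : (r * r - s * s) ^ 2 + (r * s + s * r) ^ 2 = 1 := by
    linear_combination (r ^ 2 + s ^ 2 + 1) * hv'
  have f3 : (b : ℝ) ^ 2 = 1 + a ^ 2 + 2 * a * (p * p - q * q) := by
    have g1 : (b : ℝ) * (r * r - s * s) = -(1 + a * (p * p - q * q)) := by linarith
    have g2 : (b : ℝ) * (r * s + s * r) = -(a * (p * q + q * p)) := by linarith
    calc (b : ℝ) ^ 2 = (b * (r * r - s * s)) ^ 2 + (b * (r * s + s * r)) ^ 2 := by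
          linear_combination -(b : ℝ) ^ 2 * hv2
      _ = _ := by rw [g1, g2]; linear_combination (a : ℝ) ^ 2 * hu2
  have f4 : (a : ℝ) ^ 2 = 1 + b ^ 2 + 2 * b * (r * r - s * s) := by
    have g1 : (a : ℝ) * (p * p - q * q) = -(1 + b * (r * r - s * s)) := by linarith
    have g2 : (a : ℝ) * (p * q + q * p) = -(b * (r * s + s * r)) := by linarith
    calc (a : ℝ) ^ 2 = (a * (p * p - q * q)) ^ 2 + (a * (p * q + q * p)) ^ 2 := by
          linear_combination -(a : ℝ) ^ 2 * hu2
      _ = _ := by rw [g1, g2]; linear_combination (b : ℝ) ^ 2 * hv2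
  have hp : (p - 1) * (2 * p + 1) = 0 := by
    have : p = p * p - q * q := by
      have : (a : ℝ) * p = a * (p * p - q * q) := by linarith
      exact mul_left_cancel₀ (by linarith) this
    linear_combination -this + hu'
  have hr : (r - 1) * (2 * r + 1) = 0 := by
    have : r = r * r - s * s := by
      have : (b : ℝ) * r = b * (r * r - s * s) := by linarith
      exact mul_left_cancel₀ (by linarith) this
    linear_combination -this + hv'
  rcases mul_eq_zero.1 hp with hp | hp <;> rcases mul_eq_zero.1 hr with hr | hr
  · nlinarith
  · have hp1 : p = 1 := by linarith
    have hr1 : r = -1/2 := by linarith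
    subst hp1 hr1; nlinarith
  · have hp1 : p = -1/2 := by linarith
    have hr1 : r = 1 := by linarith
    subst hp1 hr1; nlinarith
  · have hp1 : p = -1/2 := by linarith
    have hr1 : r = -1/2 := by linarith
    subst hp1 hr1
    have : (a : ℝ) + b = 2 := by linarith
    have h3 : a + b = 2 := by exact_mod_cast this
    have h4 : d ^ 2 = 3 := by omega
    have : d < 2 := by nlinarith
    interval_cases d <;> omega

/-- Equality case of the triangle inequality, seen on real parts. -/
theorem unit_relation_one (a b : ℕ) (ha : 0 < a) (hb : 0 < b)
    (u v : ℂ) (hu : ‖u‖ = 1) (hv : ‖v‖ = 1) (h : 1 + a * u + b * v = 1 + a + b) :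
    u = 1 ∧ v = 1 := by
  have e1 := congrArg Complex.re h
  simp at e1
  have ha' : (0 : ℝ) < a := by exact_mod_cast ha
  have hb' : (0 : ℝ) < b := by exact_mod_cast hb
  have k1 := Complex.re_le_norm u
  have k2 := Complex.re_le_norm v
  have aux : ∀ w : ℂ, ‖w‖ = 1 → w.re = 1 → w = 1 := fun w hw hr => by
    have := Complex.sq_norm w
    rw [hw, Complex.normSq_apply, hr] at this
    apply Complex.ext
    · simpa using hr
    · have : w.im * w.im = 0 := by linarith
      simpa using this
  constructor
  · exact aux u hu (by nlinarith)
  · exact aux v hv (by nlinarith)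

/-! ### Recognizing the dihedral quotient -/

/-- A nilpotent generalized-dihedral configuration: `s` inverts `r`, so `[r ^ m, s] = r ^ (2 m)`,
the lower central series contains all `r ^ (2 ^ k)`, and `r` has `2`-power order. -/
theorem dihedral_of_nilpotent {Q : Type*} [Group Q] [Group.IsNilpotent Q] (r s : Q)
    (hs : s * s = 1) (hrs : s * r * s⁻¹ = r⁻¹) (hns : s ∉ Subgroup.zpowers r)
    (hall : ∀ q, q ∈ Subgroup.zpowers r ∨ s * q ∈ Subgroup.zpowers r) :
    ∃ n : ℕ, Nonempty (Q ≃* DihedralGroup (2 ^ n)) := by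
  have hconj : ∀ k : ℤ, s * r ^ k * s⁻¹ = r ^ (-k) := fun k => by
    rw [← conj_zpow, hrs, inv_zpow, zpow_neg]
  have hcomm : ∀ k : ℤ, r ^ k * s = s * r ^ (-k) := fun k => by
    have := hconj (-k)
    rw [neg_neg] at this
    rw [← this]; group
  have hl : ∀ k : ℕ, r ^ (2 ^ k) ∈ (⊤ : Subgroup Q).lowerCentralSeries k := by
    intro k
    induction k with
    | zero => simp
    | succ k ih =>
      have : r ^ (2 ^ (k + 1)) = ⁅r ^ (2 ^ k), s⁆ := by
        have h := hconj (-(2 ^ k : ℕ))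
        rw [neg_neg, zpow_neg, zpow_natCast] at h
        have : ⁅r ^ (2 ^ k), s⁆ = r ^ (2 ^ k) * (s * (r ^ (2 ^ k))⁻¹ * s⁻¹) := by
          rw [commutatorElement_def]; group
        rw [this, h, ← pow_add]; ring_nf
      rw [this]
      exact Subgroup.commutator_mem_commutator ih (Subgroup.mem_top s)
  obtain ⟨N, hN⟩ := Subgroup.nilpotent_iff_lowerCentralSeries.1 ‹Group.IsNilpotent Q›
  have hord : orderOf r ∣ 2 ^ N := by
    have := hl N
    rw [hN, Subgroup.mem_bot] at this
    exact orderOf_dvd_of_pow_eq_one this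
  obtain ⟨n, -, hn⟩ := (Nat.dvd_prime_pow Nat.prime_two).1 hord
  refine ⟨n, ⟨MulEquiv.symm ?_⟩⟩
  have hp : ∀ k : ℤ, r ^ (((k : ZMod (2 ^ n)).cast : ℤ)) = r ^ k := fun k => by
    rw [zpow_eq_zpow_iff_modEq, hn, ← ZMod.intCast_eq_intCast_iff]
    simp
  let f : DihedralGroup (2 ^ n) → Q := fun
    | .r i => r ^ (i.cast : ℤ)
    | .sr i => s * r ^ (i.cast : ℤ)
  have fr : ∀ k : ℤ, f (.r (k : ZMod (2 ^ n))) = r ^ k := hp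
  have fsr : ∀ k : ℤ, f (.sr (k : ZMod (2 ^ n))) = s * r ^ k := fun k => congrArg (s * ·) (hp k)
  have fmul : ∀ a b, f (a * b) = f a * f b := by
    rintro (i | i) (j | j) <;> obtain ⟨i, rfl⟩ := ZMod.intCast_surjective i <;>
      obtain ⟨j, rfl⟩ := ZMod.intCast_surjective j
    · rw [DihedralGroup.r_mul_r, ← Int.cast_add, fr, fr, fr, zpow_add]
    · rw [DihedralGroup.r_mul_sr, ← Int.cast_sub, fsr, fr, fsr, ← mul_assoc, hcomm, mul_assoc,
        ← zpow_add]
      congr 2; ring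
    · rw [DihedralGroup.sr_mul_r, ← Int.cast_add, fsr, fsr, fr, zpow_add, mul_assoc]
    · rw [DihedralGroup.sr_mul_sr, ← Int.cast_sub, fr, fsr, fsr, mul_assoc, ← mul_assoc (r ^ i),
        hcomm, mul_assoc, ← mul_assoc, hs, one_mul, ← zpow_add]
      congr 1; ring
  let F : DihedralGroup (2 ^ n) →* Q := MonoidHom.mk' f fmul
  refine MulEquiv.ofBijective F ⟨?_, ?_⟩
  · rw [injective_iff_map_eq_one]
    rintro (i | i) hi <;> obtain ⟨i, rfl⟩ := ZMod.intCast_surjective i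
    · have : r ^ i = 1 := (fr i).symm.trans hi
      rw [← orderOf_dvd_iff_zpow_eq_one, hn, ← ZMod.intCast_zmod_eq_zero_iff_dvd] at this
      rw [this]; rfl
    · have : s * r ^ i = 1 := (fsr i).symm.trans hi
      refine absurd ⟨-i, ?_⟩ hns
      simp only [zpow_neg]
      exact (eq_inv_of_mul_eq_one_left this).symm
  · intro q
    rcases hall q with ⟨k, hk⟩ | ⟨k, hk⟩
    · exact ⟨.r k, (fr k).trans hk⟩
    · refine ⟨.sr k, (fsr k).trans ?_⟩
      simp only at hk
      rw [hk, ← mul_assoc, hs, one_mul]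

/-- Two eigenlines of `ρ x` are exchanged by `g₀` and preserved by `C = ker ε`. If `c ∈ C` acts on the
first one by `l c`, it acts on the second one by `l (g₀⁻¹ c g₀)`, so the homomorphism
`c ↦ l c / l (g₀⁻¹ c g₀)` has kernel `Z(G)`. Hence `C / Z(G)` is cyclic; `g₀` inverts it, and
`g₀ ^ 2` is central. -/
theorem quotient_dihedral {G : Type*} [Group G] [Finite G] [Group.IsNilpotent G]
    {V : Type*} [AddCommGroup V] [Module ℂ V] [FiniteDimensional ℂ V]
    (hV : Module.finrank ℂ V = 2) (ρ : Representation ℂ G V) (hinj : Function.Injective ρ)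
    (x : G) (ε : G →* ℂ) (hε : ∀ g, ρ (g * x * g⁻¹) = ε g • ρ x)
    (hpm : ∀ g, ε g = 1 ∨ ε g = -1) (g₀ : G) (hg₀ : ε g₀ = -1) :
    ∃ n : ℕ, Nonempty ((G ⧸ Subgroup.center G) ≃* DihedralGroup (2 ^ n)) := by
  have : Nontrivial V := Module.nontrivial_of_finrank_pos (R := ℂ) (by omega)
  have mulv : ∀ g h v, ρ (g * h) v = ρ g (ρ h v) := fun g h v => by rw [map_mul]; rfl
  have hcx : ∀ g u, ρ x (ρ g u) = ε g • ρ g (ρ x u) := fun g u => by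
    have h1 := congrArg (fun T : V →ₗ[ℂ] V => T (ρ g u)) (hε g)
    simp only [LinearMap.smul_apply] at h1
    rw [← mulv (g * x * g⁻¹), inv_mul_cancel_right, mulv] at h1
    have h2 : ε g * ε g = 1 := by rcases hpm g with h | h <;> rw [h] <;> norm_num
    rw [h1, smul_smul, h2, one_smul]
  obtain ⟨t, ht⟩ := Module.End.exists_eigenvalue (ρ x)
  obtain ⟨v, hv⟩ := ht.exists_hasEigenvector
  have hxv : ρ x v = t • v := hv.apply_eq_smul
  have hv0 : v ≠ 0 := hv.2
  have ht0 : t ≠ 0 := by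
    rintro rfl
    apply hv0
    have : ρ (x⁻¹ * x) v = ρ x⁻¹ (ρ x v) := mulv _ _ _
    simpa [hxv] using this
  set w := ρ g₀ v with hw
  have hxw : ρ x w = -(t • w) := by rw [hw, hcx, hg₀, hxv]; simp
  have hind : ∀ a b : ℂ, a • v + b • w = 0 → b = 0 := by
    intro a b h
    have h1 := congrArg (ρ x) h
    simp only [map_add, map_smul, hxv, hxw, map_zero] at h1
    have h2 : (2 * t * b) • w = 0 := by
      have : (2 * t * b) • w = t • (a • v + b • w) - (a • t • v + b • -(t • w)) := by module
      rw [this, h, h1]; simp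
    have hw0 : w ≠ 0 := by
      intro h0
      apply hv0
      have : ρ (g₀⁻¹ * g₀) v = ρ g₀⁻¹ w := mulv _ _ _
      simpa [h0] using this
    rcases smul_eq_zero.1 h2 with h | h
    · simpa [ht0] using h
    · exact absurd h hw0
  have hli : LinearIndependent ℂ ![v, w] := by
    rw [LinearIndependent.pair_iff]
    intro a b h
    have hb := hind a b h
    subst hb
    simpa [hv0] using h
  have hspan : ∀ u : V, ∃ a b : ℂ, a • v + b • w = u := by
    have := hli.span_eq_top_of_card_eq_finrank' (by simp [hV])
    intro u
    have hu : u ∈ Submodule.span ℂ (Set.range ![v, w]) := this ▸ Submodule.mem_top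
    rwa [Matrix.range_cons, Matrix.range_cons, Matrix.range_empty, Set.union_empty,
      Set.singleton_union, Submodule.mem_span_pair] at hu
  have hex : ∀ c, ∃ a : ℂ, ε c = 1 → ρ c v = a • v := by
    intro c
    by_cases hc : ε c = 1
    · obtain ⟨a, b, hab⟩ := hspan (ρ c v)
      refine ⟨a, fun _ => ?_⟩
      have h1 : ρ x (ρ c v) = t • ρ c v := by rw [hcx, hc, hxv]; simp
      rw [← hab] at h1
      simp only [map_add, map_smul, hxv, hxw] at h1
      have h2 : (0 : ℂ) • v + (2 * t * b) • w = 0 := by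
        have : (0 : ℂ) • v + (2 * t * b) • w
          = t • (a • v + b • w) - (a • t • v + b • -(t • w)) := by module
        rw [this, h1, sub_self]
      have hb : b = 0 := by simpa [ht0] using hind _ _ h2
      rw [← hab, hb]; simp
    · exact ⟨0, fun h => absurd h hc⟩
  choose l hl using hex
  have vinj : ∀ a b : ℂ, a • v = b • v → a = b := fun a b h => smul_left_injective ℂ hv0 h
  have hl1 : l 1 = 1 := vinj _ _ (by rw [← hl 1 (map_one ε)]; simp)
  have hlm : ∀ c c', ε c = 1 → ε c' = 1 → l (c * c') = l c * l c' := fun c c' h h' => by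
    apply vinj
    rw [← hl (c * c') (by rw [map_mul, h, h', one_mul]), mulv, hl c' h', map_smul, hl c h,
      smul_smul, mul_comm]
  have hεconj : ∀ g c, ε c = 1 → ε (g⁻¹ * c * g) = 1 := fun g c h => by
    rw [map_mul, map_mul, h, mul_one, ← map_mul]; simp
  have hεinv : ∀ c, ε c = 1 → ε c⁻¹ = 1 := fun c h => by
    have := map_mul ε c⁻¹ c
    rw [inv_mul_cancel, map_one, h, mul_one] at this
    exact this.symm
  have hlinv : ∀ c, ε c = 1 → l c * l c⁻¹ = 1 := fun c h => by
    rw [← hlm c c⁻¹ h (hεinv c h), mul_inv_cancel, hl1]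
  -- an element acting on both eigenlines by the same scalar is central, by faithfulness
  have hker : ∀ c, ε c = 1 → l c * l (g₀⁻¹ * c⁻¹ * g₀) = 1 → c ∈ Subgroup.center G := by
    intro c hc h
    have h' : l c = l (g₀⁻¹ * c * g₀) := by
      have h1 := hlinv _ (hεconj g₀ c hc)
      have h2 : (g₀⁻¹ * c * g₀)⁻¹ = g₀⁻¹ * c⁻¹ * g₀ := by group
      rw [h2] at h1
      exact mul_right_cancel₀ (right_ne_zero_of_mul_eq_one h) (h.trans h1.symm)
    have hcu : ∀ u, ρ c u = l c • u := by
      intro u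
      obtain ⟨a, b, rfl⟩ := hspan u
      have hcw : ρ c w = l c • w := by
        have : ρ c w = ρ g₀ (ρ (g₀⁻¹ * c * g₀) v) := by
          rw [hw, ← mulv, ← mulv]; congr 2; group
        rw [this, hl _ (hεconj g₀ c hc), ← h', map_smul]
      rw [map_add, map_smul, map_smul, hl c hc, hcw]; module
    rw [Subgroup.mem_center_iff]
    intro g
    apply hinj
    ext u
    rw [mulv, mulv, hcu, hcu, map_smul]
  have hkerc : ∀ z ∈ Subgroup.center G, ε z = 1 := by
    intro z hz
    have h := hε z
    rw [← (Subgroup.mem_center_iff.1 hz x), mul_inv_cancel_right] at h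
    have hne : ρ x ≠ 0 := fun h0 => by
      rw [h0] at hxv
      exact hv0 ((smul_eq_zero.1 hxv.symm).resolve_left ht0)
    exact (smul_left_injective ℂ hne (by simpa using h)).symm
  let θ : ε.ker →* ℂ :=
    { toFun := fun c => l c * l (g₀⁻¹ * (c : G)⁻¹ * g₀)
      map_one' := by simp [hl1]
      map_mul' := by
        rintro ⟨c, hc⟩ ⟨d, hd⟩
        have hc : ε c = 1 := hc
        have hd : ε d = 1 := hd
        have e : g₀⁻¹ * (c * d)⁻¹ * g₀ = (g₀⁻¹ * d⁻¹ * g₀) * (g₀⁻¹ * c⁻¹ * g₀) := by group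
        simp only [Subgroup.coe_mul]
        rw [e, hlm _ _ hc hd, hlm _ _ (hεconj _ _ (hεinv _ hd)) (hεconj _ _ (hεinv _ hc))]
        ring }
  have : Finite θ.toHomUnits.range := Set.finite_range θ.toHomUnits
  have hcyc : IsCyclic θ.toHomUnits.range := inferInstance
  obtain ⟨⟨_, c₀, rfl⟩, hc₀⟩ := hcyc.exists_generator
  have hgen : ∀ c : ε.ker, ∃ k : ℤ, (c : G)⁻¹ * (c₀ : G) ^ k ∈ Subgroup.center G := by
    intro c
    obtain ⟨k, hk⟩ := hc₀ ⟨θ.toHomUnits c, c, rfl⟩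
    refine ⟨k, ?_⟩
    have h1 : θ.toHomUnits (c⁻¹ * c₀ ^ k) = 1 := by
      have := congrArg Subtype.val hk
      simp only [Subgroup.coe_zpow] at this
      rw [map_mul, map_zpow, this, ← map_mul]; simp
    have h2 : θ (c⁻¹ * c₀ ^ k) = 1 := by
      have := congrArg Units.val h1
      simpa using this
    have := hker _ (c⁻¹ * c₀ ^ k).2 h2
    simpa using this
  have hgg : ε (g₀ * g₀) = 1 := by rw [map_mul, hg₀]; norm_num
  have hgc : g₀ * g₀ ∈ Subgroup.center G := by
    apply hker _ hgg
    have : g₀⁻¹ * (g₀ * g₀)⁻¹ * g₀ = (g₀ * g₀)⁻¹ := by group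
    rw [this, hlinv _ hgg]
  have hc₀ε : ε c₀ = 1 := c₀.2
  refine dihedral_of_nilpotent (Q := G ⧸ Subgroup.center G) (c₀ : G) (g₀ : G) ?_ ?_ ?_ ?_
  · rw [← QuotientGroup.mk_mul, QuotientGroup.eq_one_iff]; exact hgc
  · rw [eq_inv_iff_mul_eq_one, ← QuotientGroup.mk_mul, ← QuotientGroup.mk_inv,
      ← QuotientGroup.mk_mul, ← QuotientGroup.mk_mul, QuotientGroup.eq_one_iff]
    -- `g₀ ^ 2` is central, so conjugating by `g₀` or by its inverse is the same
    have e : g₀ * c₀ * g₀⁻¹ = g₀⁻¹ * c₀ * g₀ := by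
      have := Subgroup.mem_center_iff.1 hgc (c₀ : G)
      have h2 : g₀ * c₀ * g₀⁻¹ = g₀⁻¹ * ((g₀ * g₀) * c₀) * g₀⁻¹ := by group
      rw [h2, ← this]; group
    rw [e]
    have h1 := hεconj g₀ c₀ hc₀ε
    apply hker _ (by rw [map_mul, h1, hc₀ε, one_mul])
    have e2 : g₀⁻¹ * (g₀⁻¹ * c₀ * g₀ * c₀)⁻¹ * g₀
        = (g₀⁻¹ * (c₀ : G)⁻¹ * g₀) * (c₀ : G)⁻¹ := by
      have h3 : (g₀⁻¹ * c₀ * g₀ * c₀)⁻¹ = (c₀ : G)⁻¹ * (g₀⁻¹ * (c₀ : G)⁻¹ * g₀) := by group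
      have h4 : g₀⁻¹ * (c₀ : G)⁻¹ * g₀ = g₀ * (c₀ : G)⁻¹ * g₀⁻¹ := by
        have := congrArg (·⁻¹) e
        simp only [mul_inv_rev, inv_inv] at this
        rw [← mul_assoc, ← mul_assoc] at this
        exact this.symm
      rw [h3]
      conv_lhs => rw [h4]
      group
    have h5 : ε (g₀⁻¹ * (c₀ : G)⁻¹ * g₀) = 1 := hεconj _ _ (hεinv _ hc₀ε)
    have h6 := hlinv _ h1
    have h7 : (g₀⁻¹ * (c₀ : G) * g₀)⁻¹ = g₀⁻¹ * (c₀ : G)⁻¹ * g₀ := by group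
    rw [h7] at h6
    rw [e2, hlm _ _ h1 hc₀ε, hlm _ _ h5 (hεinv _ hc₀ε)]
    linear_combination l (↑c₀) * l (↑c₀)⁻¹ * h6 + hlinv _ hc₀ε
  · rintro ⟨k, hk⟩
    simp only [← QuotientGroup.mk_zpow] at hk
    rw [QuotientGroup.eq] at hk
    have h1 := hkerc _ hk
    have h2 : ε ((c₀ : G) ^ k)⁻¹ = 1 := ((c₀ ^ k)⁻¹).2
    rw [map_mul, h2, hg₀] at h1
    norm_num at h1
  · intro q
    obtain ⟨g, rfl⟩ := QuotientGroup.mk_surjective q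
    rcases hpm g with h | h
    · obtain ⟨k, hk⟩ := hgen ⟨g, h⟩
      exact Or.inl ⟨k, by
        simp only [← QuotientGroup.mk_zpow]; exact (QuotientGroup.eq.2 hk).symm⟩
    · obtain ⟨k, hk⟩ := hgen ⟨g₀ * g, by
        rw [MonoidHom.mem_ker, map_mul, h, hg₀]; norm_num⟩
      exact Or.inr ⟨k, by
        simp only [← QuotientGroup.mk_zpow, ← QuotientGroup.mk_mul]
        exact (QuotientGroup.eq.2 hk).symm⟩

/-! ### Elements of the second center -/

section
variable {G : Type*} [Group G] [Finite G] {d n₁ n₂ : ℕ}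

omit [Finite G] in
theorem dim_pos {n : ℕ} (ρ : Representation ℂ G (Fin n → ℂ))
    (h : charInner G ρ.character ρ.character = 1) : 0 < n := by
  rcases Nat.eq_zero_or_pos n with rfl | hn
  · exfalso
    have h0 : ∀ g, ρ.character g = 0 := fun g => by
      have : ρ g = 0 := LinearMap.ext fun v => Subsingleton.elim _ _
      rw [character, this, map_zero]
    simp [charInner, h0] at h
  · exact hn

omit [Finite G] in
theorem character_of_scalar {n : ℕ} (ρ : Representation ℂ G (Fin n → ℂ)) (g : G) (c : ℂ)
    (h : ρ g = c • (1 : (Fin n → ℂ) →ₗ[ℂ] (Fin n → ℂ))) : ρ.character g = c * n := by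
  rw [character, h, map_smul, LinearMap.trace_one]; simp

/-- `[χ, ψ χ] = [χ χ̄, ψ]`, expanded along the decomposition of `χ χ̄`. -/
theorem charInner_decomp (m₁ m₂ : ℕ) (χ α₁ α₂ ψ : G → ℂ)
    (hprod : ∀ g, χ g * (starRingEnd ℂ) (χ g) = 1 + (m₁ : ℂ) * α₁ g + (m₂ : ℂ) * α₂ g) :
    charInner G χ (fun g => ψ g * χ g) =
      charInner G (fun _ => 1) ψ + m₁ * charInner G α₁ ψ + m₂ * charInner G α₂ ψ := by
  have := Fintype.ofFinite G
  simp only [charInner, finsum_eq_sum_of_fintype]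
  have : ∀ g, χ g * (starRingEnd ℂ) (ψ g * χ g) = 1 * (starRingEnd ℂ) (ψ g) +
      m₁ * (α₁ g * (starRingEnd ℂ) (ψ g)) + m₂ * (α₂ g * (starRingEnd ℂ) (ψ g)) := fun g => by
    rw [map_mul]
    linear_combination (starRingEnd ℂ) (ψ g) * hprod g
  simp only [this, Finset.sum_add_distrib, ← Finset.mul_sum]
  ring

theorem charInner_nat {n : ℕ} {V : Type*} [AddCommGroup V] [Module ℂ V] [FiniteDimensional ℂ V]
    (σ : Representation ℂ G (Fin n → ℂ)) (ρ : Representation ℂ G V) :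
    ∃ k : ℕ, charInner G σ.character ρ.character = k := ⟨_, charInner_eq_finrank ρ σ⟩

theorem one_char_nat {V : Type*} [AddCommGroup V] [Module ℂ V] [FiniteDimensional ℂ V]
    (ρ : Representation ℂ G V) :
    ∃ k : ℕ, charInner G (fun _ => 1) ρ.character = k := by
  have : (fun _ => 1 : G → ℂ) = (linRep (1 : G →* ℂ)).character := by
    funext g; rw [linRep_character]; rfl
  rw [this]
  exact ⟨_, charInner_eq_finrank ρ _⟩

theorem charInner_of_norm_one (ψ χ : G → ℂ) (hψ : ∀ g, ‖ψ g‖ = 1)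
    (hχ : charInner G χ χ = 1) : charInner G (fun g => ψ g * χ g) (fun g => ψ g * χ g) = 1 := by
  rw [charInner_self] at hχ ⊢
  simpa [hψ] using hχ

/-- A sign character `ε` with `ε χ = χ` occurs in `χ χ̄` with multiplicity `[χ, ε χ] = 1`. It is
trivial at `x`, where `α₂` is negative, so it must be `α₁`, and the degrees follow. -/
theorem degrees_of_sign (ρ : Representation ℂ G (Fin d → ℂ))
    (σ₁ : Representation ℂ G (Fin n₁ → ℂ)) (σ₂ : Representation ℂ G (Fin n₂ → ℂ)) (m₁ m₂ : ℕ)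
    (hρ : charInner G ρ.character ρ.character = 1)
    (hσ₁ : charInner G σ₁.character σ₁.character = 1)
    (hσ₂ : charInner G σ₂.character σ₂.character = 1)
    (hprod : ∀ g, ρ.character g * (starRingEnd ℂ) (ρ.character g) =
      1 + (m₁ : ℂ) * σ₁.character g + (m₂ : ℂ) * σ₂.character g)
    (hm : m₁ * n₁ + 1 = m₂ * n₂) (hd : d ^ 2 = 1 + m₁ * n₁ + m₂ * n₂)
    (x : G) (hx : σ₂.character x = -n₂)
    (ε : G →* ℂ) (hpm : ∀ g, ε g = 1 ∨ ε g = -1) (hεx : ε x = 1)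
    (hεχ : ∀ g, ε g * ρ.character g = ρ.character g) (g₀ : G) (hg₀ : ε g₀ = -1) :
    m₁ = 1 ∧ m₂ = 1 ∧ d = 2 := by
  have hεn : ∀ g, ‖ε g‖ = 1 := fun g => by rcases hpm g with h | h <;> rw [h] <;> simp
  have hone : charInner G (fun _ => (1 : ℂ)) (fun _ => 1) = 1 := by
    have := Fintype.ofFinite G
    rw [charInner, finsum_eq_sum_of_fintype]
    simp
  have hlr : (linRep ε).character = ε := funext (linRep_character ε)
  have hεε : charInner G ε ε = 1 := by
    simpa using charInner_of_norm_one ε (fun _ => 1) hεn hone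
  have h1 := charInner_decomp m₁ m₂ _ _ _ ε hprod
  simp only [hεχ] at h1
  obtain ⟨k₀, hk₀⟩ := one_char_nat (linRep ε)
  obtain ⟨k₁, hk₁⟩ := charInner_nat σ₁ (linRep ε)
  obtain ⟨k₂, hk₂⟩ := charInner_nat σ₂ (linRep ε)
  rw [hlr] at hk₀ hk₁ hk₂
  have hk : 1 = k₀ + m₁ * k₁ + m₂ * k₂ := by
    have h2 := hρ.symm.trans h1
    rw [hk₀, hk₁, hk₂] at h2
    exact_mod_cast h2
  have hk00 : k₀ ≠ 1 := fun h => by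
    have := congrFun ((charInner_unit _ _ hone hεε k₀ hk₀).2 h) g₀
    rw [hg₀] at this
    norm_num at this
  have hk20 : k₂ ≠ 1 := fun h => by
    have := congrFun ((charInner_unit _ _ hσ₂ hεε k₂ hk₂).2 h) x
    rw [hεx, hx] at this
    have h3 := congrArg Complex.re this
    simp at h3
    have : (0 : ℝ) ≤ n₂ := Nat.cast_nonneg _
    linarith
  have hle0 := (charInner_unit _ _ hone hεε k₀ hk₀).1
  have hle1 := (charInner_unit _ _ hσ₁ hεε k₁ hk₁).1
  have hle2 := (charInner_unit _ _ hσ₂ hεε k₂ hk₂).1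
  have e0 : k₀ = 0 := by omega
  have e2 : k₂ = 0 := by omega
  subst e0 e2
  have e1 : k₁ = 1 := by
    rcases Nat.eq_zero_or_pos k₁ with h | h
    · subst h; omega
    · omega
  subst e1
  have hm1 : m₁ = 1 := by omega
  have hα := (charInner_unit _ _ hσ₁ hεε 1 hk₁).2 rfl
  have hn1 : n₁ = 1 := by
    have := congrFun hα 1
    rw [char_one, map_one] at this
    simpa using this
  subst hm1 hn1
  have hd2 : d = 2 := by
    have : d ^ 2 = 2 ^ 2 := by omega
    exact Nat.pow_left_injective (n := 2) (by norm_num) this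
  refine ⟨rfl, ?_, hd2⟩
  have hb : m₂ * n₂ = 2 := by omega
  have hm2 : m₂ ∣ 2 := ⟨n₂, hb.symm⟩
  rcases (Nat.dvd_prime Nat.prime_two).1 hm2 with h | h
  · exact h
  exfalso
  -- a linear `α₂` would occur in `χ χ̄` with multiplicity `[χ, α₂ χ] ≤ 1`
  subst h
  have hn2 : n₂ = 1 := by omega
  subst hn2
  have hsc : ∀ g, ‖σ₂.character g‖ = 1 := fun g => by
    have : σ₂ g = (σ₂ g (fun _ => 1) 0) • (1 : (Fin 1 → ℂ) →ₗ[ℂ] (Fin 1 → ℂ)) := by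
      refine LinearMap.ext fun v => ?_
      have hv : v = v 0 • (fun _ => (1 : ℂ)) := by
        funext i; rw [Subsingleton.elim i 0]; simp
      funext i
      rw [Subsingleton.elim i 0]
      conv_lhs => rw [hv, map_smul]
      simp [mul_comm]
    rw [character_of_scalar σ₂ g _ this]
    simpa using norm_scalar σ₂ g _ this
  have ht : (tprod σ₂ ρ).character = fun g => σ₂.character g * ρ.character g := by
    rw [char_tensor]; rfl
  obtain ⟨k, hk'⟩ := charInner_nat ρ (tprod σ₂ ρ)
  obtain ⟨j₀, hj₀⟩ := one_char_nat σ₂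
  obtain ⟨j₁, hj₁⟩ := charInner_nat σ₁ σ₂
  rw [ht] at hk'
  have hle := (charInner_unit _ _ hρ (charInner_of_norm_one _ _ hsc hρ) k hk').1
  have h2 := charInner_decomp 1 2 _ _ _ σ₂.character hprod
  rw [hk', hj₀, hj₁, hσ₂] at h2
  have h3 : k = j₀ + 1 * j₁ + 2 * 1 := by exact_mod_cast h2
  omega

/-- The analysis of an element `x` of the second center outside the center: it acts by a sign in
both `α₁` and `α₂`, and `g ↦ [g, x]` defines a sign character fixing `χ`. -/
theorem second_center_analysis (ρ : Representation ℂ G (Fin d → ℂ))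
    (σ₁ : Representation ℂ G (Fin n₁ → ℂ)) (σ₂ : Representation ℂ G (Fin n₂ → ℂ)) (m₁ m₂ : ℕ)
    (hρ : charInner G ρ.character ρ.character = 1)
    (hσ₁ : charInner G σ₁.character σ₁.character = 1)
    (hσ₂ : charInner G σ₂.character σ₂.character = 1)
    (hm₁ : 0 < m₁) (hm₂ : 0 < m₂) (hinj : Function.Injective ρ)
    (hprod : ∀ g, ρ.character g * (starRingEnd ℂ) (ρ.character g) =
      1 + (m₁ : ℂ) * σ₁.character g + (m₂ : ℂ) * σ₂.character g)
    (x : G) (hxZ : x ∉ Subgroup.center G)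
    (hx : ∀ g, g * x * g⁻¹ * x⁻¹ ∈ Subgroup.center G) :
    m₁ = 1 ∧ m₂ = 1 ∧ d = 2 ∧ ∃ ε : G →* ℂ, (∀ g, ρ (g * x * g⁻¹) = ε g • ρ x) ∧
      (∀ g, ε g = 1 ∨ ε g = -1) ∧ ∃ g₀, ε g₀ = -1 := by
  have hd := dim_pos ρ hρ
  have hn₁ := dim_pos σ₁ hσ₁
  have hn₂ := dim_pos σ₂ hσ₂
  have : Nonempty (Fin d) := ⟨⟨0, hd⟩⟩
  have : Nonempty (Fin n₁) := ⟨⟨0, hn₁⟩⟩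
  have : Nonempty (Fin n₂) := ⟨⟨0, hn₂⟩⟩
  have ha : 0 < m₁ * n₁ := Nat.mul_pos hm₁ hn₁
  have hb : 0 < m₂ * n₂ := Nat.mul_pos hm₂ hn₂
  have scal : ∀ {n : ℕ} (τ : Representation ℂ G (Fin n → ℂ))
      (_ : charInner G τ.character τ.character = 1) (y : G) (_ : ∀ g, τ (y * g) = τ (g * y)),
      ∃ c : ℂ, τ y = c • (1 : (Fin n → ℂ) →ₗ[ℂ] (Fin n → ℂ)) := fun τ hτ y hy =>
    exists_scalar τ hτ (τ y) fun g => by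
      have := hy g
      rwa [map_mul, map_mul] at this
  have scalZ : ∀ {n : ℕ} (τ : Representation ℂ G (Fin n → ℂ))
      (_ : charInner G τ.character τ.character = 1) (z : G) (_ : z ∈ Subgroup.center G),
      ∃ c : ℂ, τ z = c • (1 : (Fin n → ℂ) →ₗ[ℂ] (Fin n → ℂ)) := fun τ hτ z hz =>
    scal τ hτ z fun g => by rw [Subgroup.mem_center_iff.1 hz g]
  have hdeg : d ^ 2 = 1 + m₁ * n₁ + m₂ * n₂ := by
    have := hprod 1
    simp only [char_one, Module.finrank_fin_fun, Complex.conj_natCast] at this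
    rw [pow_two]
    exact_mod_cast this
  -- the center lies in the kernels of `α₁` and `α₂`, because `|χ|` is maximal on it
  have hZ : ∀ z ∈ Subgroup.center G, σ₁ z = 1 ∧ σ₂ z = 1 := by
    intro z hz
    obtain ⟨c, hc⟩ := scalZ ρ hρ z hz
    obtain ⟨u, hu⟩ := scalZ σ₁ hσ₁ z hz
    obtain ⟨v, hv⟩ := scalZ σ₂ hσ₂ z hz
    have h := hprod z
    rw [character_of_scalar ρ z c hc, character_of_scalar σ₁ z u hu,
      character_of_scalar σ₂ z v hv, Complex.mul_conj, Complex.normSq_eq_norm_sq, norm_mul,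
      norm_scalar ρ z c hc, one_mul, Complex.norm_natCast] at h
    have hd' : (((d : ℝ) ^ 2 : ℝ) : ℂ) = 1 + m₁ * n₁ + m₂ * n₂ := by exact_mod_cast hdeg
    rw [hd'] at h
    obtain ⟨h1, h2⟩ := unit_relation_one (m₁ * n₁) (m₂ * n₂) ha hb u v
      (norm_scalar σ₁ z u hu) (norm_scalar σ₂ z v hv) (by push_cast; linear_combination -h)
    rw [hu, hv, h1, h2, one_smul, one_smul]
    exact ⟨rfl, rfl⟩
  have scal2 : ∀ {n : ℕ} (τ : Representation ℂ G (Fin n → ℂ))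
      (_ : charInner G τ.character τ.character = 1) (_ : ∀ z ∈ Subgroup.center G, τ z = 1),
      ∃ c : ℂ, τ x = c • (1 : (Fin n → ℂ) →ₗ[ℂ] (Fin n → ℂ)) := fun τ hτ hk =>
    scal τ hτ x fun g => by
      have h1 : g * x = (g * x * g⁻¹ * x⁻¹) * (x * g) := by group
      rw [h1, map_mul τ (g * x * g⁻¹ * x⁻¹), hk _ (hx g), one_mul]
  have signs : ∀ y : G, (∀ g, g * y * g⁻¹ * y⁻¹ ∈ Subgroup.center G) →
      ∃ ε : G →* ℂ, ∀ g, ρ (g * y * g⁻¹) = ε g • ρ y := exists_sign ρ (scalZ ρ hρ)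
  have nontriv : ∀ (y : G) (ε : G →* ℂ), (∀ g, ρ (g * y * g⁻¹) = ε g • ρ y) →
      y ∉ Subgroup.center G → ∃ g, ε g ≠ 1 := by
    intro y ε h hy
    by_contra! hall
    apply hy
    rw [Subgroup.mem_center_iff]
    intro g
    have h1 := h g
    rw [hall g, one_smul] at h1
    exact mul_inv_eq_iff_eq_mul.1 (hinj h1)
  have rel : ∀ (y : G), (∀ g, g * y * g⁻¹ * y⁻¹ ∈ Subgroup.center G) →
      y ∉ Subgroup.center G → ∀ u v : ℂ,
      σ₁ y = u • (1 : (Fin n₁ → ℂ) →ₗ[ℂ] (Fin n₁ → ℂ)) →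
      σ₂ y = v • (1 : (Fin n₂ → ℂ) →ₗ[ℂ] (Fin n₂ → ℂ)) →
      1 + ((m₁ * n₁ : ℕ) : ℂ) * u + ((m₂ * n₂ : ℕ) : ℂ) * v = 0 := by
    intro y hy hyZ u v hu hv
    obtain ⟨ε, hε⟩ := signs y hy
    obtain ⟨g, hg⟩ := nontriv y ε hε hyZ
    have h0 : ρ.character y = 0 := by
      have h1 : ρ.character (g * y * g⁻¹) = ε g * ρ.character y := by
        rw [character, hε g, map_smul]; rfl
      rw [char_conj] at h1
      have h2 : (ε g - 1) * ρ.character y = 0 := by linear_combination -h1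
      exact (mul_eq_zero.1 h2).resolve_left (sub_ne_zero.2 hg)
    have h := hprod y
    rw [h0, zero_mul, character_of_scalar σ₁ y u hu, character_of_scalar σ₂ y v hv] at h
    push_cast
    linear_combination -h
  obtain ⟨u, hu⟩ := scal2 σ₁ hσ₁ fun z hz => (hZ z hz).1
  obtain ⟨v, hv⟩ := scal2 σ₂ hσ₂ fun z hz => (hZ z hz).2
  have hun := norm_scalar σ₁ x u hu
  have hvn := norm_scalar σ₂ x v hv
  have hrel := rel x hx hxZ u v hu hv
  have hu2 : σ₁ (x * x) = u ^ 2 • (1 : (Fin n₁ → ℂ) →ₗ[ℂ] (Fin n₁ → ℂ)) := by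
    rw [map_mul, hu, smul_mul_smul_comm, pow_two, one_mul]
  have hv2 : σ₂ (x * x) = v ^ 2 • (1 : (Fin n₂ → ℂ) →ₗ[ℂ] (Fin n₂ → ℂ)) := by
    rw [map_mul, hv, smul_mul_smul_comm, pow_two, one_mul]
  have hxx : x * x ∈ Subgroup.center G := by
    by_contra hxx
    refine no_unit_relations _ _ d ha hb hdeg u v hun hvn hrel (rel (x * x) (fun g => ?_) hxx _ _ hu2 hv2)
    have : g * (x * x) * g⁻¹ * (x * x)⁻¹ =
        (g * x * g⁻¹ * x⁻¹) * (x * (g * x * g⁻¹ * x⁻¹) * x⁻¹) := by group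
    rw [this]
    exact mul_mem (hx g) (Subgroup.Normal.conj_mem inferInstance _ (hx g) x)
  have hu1 : u = 1 ∨ u = -1 := by
    have h := character_of_scalar σ₁ _ _ hu2
    rw [character, (hZ _ hxx).1, LinearMap.trace_one] at h
    have hn : (n₁ : ℂ) ≠ 0 := by exact_mod_cast hn₁.ne'
    have : u ^ 2 = 1 := mul_right_cancel₀ hn (by simpa using h.symm)
    exact mul_self_eq_one_iff.1 (by rwa [← pow_two])
  have hv1 : v = 1 ∨ v = -1 := by
    have h := character_of_scalar σ₂ _ _ hv2
    rw [character, (hZ _ hxx).2, LinearMap.trace_one] at h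
    have hn : (n₂ : ℂ) ≠ 0 := by exact_mod_cast hn₂.ne'
    have : v ^ 2 = 1 := mul_right_cancel₀ hn (by simpa using h.symm)
    exact mul_self_eq_one_iff.1 (by rwa [← pow_two])
  obtain ⟨ε, hε⟩ := signs x hx
  obtain ⟨g₀, hg₀⟩ := nontriv x ε hε hxZ
  have hρne : ∀ y, ρ y ≠ 0 := fun y h => by
    have : ρ y * ρ y⁻¹ = 1 := by rw [← map_mul]; simp
    rw [h, zero_mul] at this
    exact zero_ne_one this
  have hpm : ∀ g, ε g = 1 ∨ ε g = -1 := by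
    intro g
    have h1 : g * x * g⁻¹ * (g * x * g⁻¹) = x * x := by
      have h2 : g * x * g⁻¹ * (g * x * g⁻¹) = g * (x * x) * g⁻¹ := by group
      rw [h2, Subgroup.mem_center_iff.1 hxx g]; group
    have h2 := congrArg ρ h1
    rw [map_mul, hε, smul_mul_smul_comm, ← map_mul] at h2
    have h3 : ε g * ε g = 1 := smul_left_injective ℂ (hρne (x * x)) (by simpa using h2)
    exact mul_self_eq_one_iff.1 h3
  have hg₀' : ε g₀ = -1 := (hpm g₀).resolve_left hg₀
  have hεx : ε x = 1 := by
    have := hε x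
    rw [mul_inv_cancel_right] at this
    exact (smul_left_injective ℂ (hρne x) (by simpa using this)).symm
  have hεχ : ∀ g, ε g * ρ.character g = ρ.character g := by
    intro g
    rcases hpm g with h | h
    · rw [h, one_mul]
    · -- conjugating `g` by `x` multiplies `ρ g` by `ε g`
      have h1 : ρ x * ρ g = (-1 : ℂ) • (ρ g * ρ x) := by
        have h2 := hε g⁻¹
        have h3 : ε g⁻¹ = -1 := by
          have := map_mul ε g g⁻¹
          rw [mul_inv_cancel, map_one, h] at this
          linear_combination this
        rw [h3] at h2
        have h4 : x * g = g * (g⁻¹ * x * g⁻¹⁻¹) := by group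
        rw [← map_mul, h4, map_mul, h2, mul_smul_comm]
      have h5 : ρ.character (x * g * x⁻¹) = -ρ.character g := by
        rw [character, map_mul ρ (x * g), map_mul ρ x, h1, smul_mul_assoc, mul_assoc,
          ← map_mul ρ x, mul_inv_cancel, map_one ρ, mul_one, map_smul, neg_one_smul]; rfl
      rw [char_conj] at h5
      rw [h]; linear_combination -h5
  suffices m₁ = 1 ∧ m₂ = 1 ∧ d = 2 from ⟨this.1, this.2.1, this.2.2, ε, hε, hpm, g₀, hg₀'⟩
  rcases hu1 with rfl | rfl <;> rcases hv1 with rfl | rfl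
  · exfalso
    have : 1 + (m₁ * n₁) * 1 + (m₂ * n₂) * 1 = 0 := by exact_mod_cast hrel
    omega
  · have h : m₁ * n₁ + 1 = m₂ * n₂ := by
      have : ((m₁ * n₁ : ℕ) : ℂ) + 1 = ((m₂ * n₂ : ℕ) : ℂ) := by linear_combination hrel
      exact_mod_cast this
    exact degrees_of_sign ρ σ₁ σ₂ m₁ m₂ hρ hσ₁ hσ₂ hprod h hdeg x
      (by rw [character_of_scalar σ₂ x _ hv]; ring) ε hpm hεx hεχ g₀ hg₀'
  · have h : m₂ * n₂ + 1 = m₁ * n₁ := by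
      have : ((m₂ * n₂ : ℕ) : ℂ) + 1 = ((m₁ * n₁ : ℕ) : ℂ) := by linear_combination hrel
      exact_mod_cast this
    obtain ⟨h1, h2, h3⟩ := degrees_of_sign ρ σ₂ σ₁ m₂ m₁ hρ hσ₂ hσ₁
      (fun g => by rw [hprod g]; ring) h (by omega) x
      (by rw [character_of_scalar σ₁ x _ hu]; ring) ε hpm hεx hεχ g₀ hg₀'
    exact ⟨h2, h1, h3⟩
  · exfalso
    have : ((m₁ * n₁ : ℕ) : ℂ) + ((m₂ * n₂ : ℕ) : ℂ) = 1 := by linear_combination -hrel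
    have : m₁ * n₁ + m₂ * n₂ = 1 := by exact_mod_cast this
    omega

/-- If every element were central, all `ρ g` would be scalars, so `[χ, χ] = d²` and `d = 1`. -/
theorem center_ne_top (ρ : Representation ℂ G (Fin d → ℂ))
    (hρ : charInner G ρ.character ρ.character = 1) (hd : d ≠ 1) :
    ∃ g, g ∉ Subgroup.center G := by
  by_contra! hall
  apply hd
  have hd0 := dim_pos ρ hρ
  have : Nonempty (Fin d) := ⟨⟨0, hd0⟩⟩
  have h : ∀ g, ‖ρ.character g‖ = d := fun g => by
    obtain ⟨c, hc⟩ := exists_scalar ρ hρ (ρ g) fun h => by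
      have := congrArg ρ (Subgroup.mem_center_iff.1 (hall g) h)
      rw [map_mul, map_mul] at this
      exact this.symm
    rw [character_of_scalar ρ g c hc, norm_mul, norm_scalar ρ g c hc]
    simp
  have := Fintype.ofFinite G
  rw [charInner_self, finsum_eq_sum_of_fintype] at hρ
  have h2 : (d : ℝ) ^ 2 = 1 := by
    have hc : (Nat.card G : ℝ) ≠ 0 := by exact_mod_cast Nat.card_pos.ne'
    simp only [h, Finset.sum_const, Finset.card_univ, ← Nat.card_eq_fintype_card, nsmul_eq_mul,
      inv_mul_cancel_left₀ hc] at hρ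
    exact_mod_cast hρ
  have h3 : d ^ 2 = 1 := by exact_mod_cast h2
  exact (Nat.pow_eq_one.1 h3).resolve_right (by norm_num)
end

end Auxiliary

/-! ### The nilpotent case -/

/-- If `G` is a finite nilpotent group satisfying Hypothesis 4.1, then `m₁ = m₂ = 1`,
`χ(1) = 2`, and `G/Z(G)` is isomorphic to a dihedral 2-group. -/
theorem nilpotent_case {G : Type*} [Group G] [Finite G] [Group.IsNilpotent G]
    (χ α₁ α₂ : G → ℂ) (m₁ m₂ : ℕ)
    (hχ : IsIrrChar G χ) (hχfaithful : IsFaithfulChar χ)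
    (hα₁ : IsIrrChar G α₁) (hα₂ : IsIrrChar G α₂) (hα_ne : α₁ ≠ α₂)
    (hα₁_nonprincipal : α₁ ≠ fun _ => (1 : ℂ)) (hα₂_nonprincipal : α₂ ≠ fun _ => (1 : ℂ))
    (hm₁ : 0 < m₁) (hm₂ : 0 < m₂)
    (hprod : ∀ g : G, χ g * (starRingEnd ℂ) (χ g) = 1 + (m₁ : ℂ) * α₁ g + (m₂ : ℂ) * α₂ g) :
    m₁ = 1 ∧ m₂ = 1 ∧ χ 1 = 2 ∧
    ∃ n : ℕ, Nonempty ((G ⧸ Subgroup.center G) ≃* DihedralGroup (2 ^ n)) := by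
  obtain ⟨⟨d, ρ, hχρ⟩, hρ⟩ := hχ
  obtain ⟨⟨n₁, σ₁, hα₁σ⟩, hσ₁⟩ := hα₁
  obtain ⟨⟨n₂, σ₂, hα₂σ⟩, hσ₂⟩ := hα₂
  obtain rfl : χ = ρ.character := funext hχρ
  obtain rfl : α₁ = σ₁.character := funext hα₁σ
  obtain rfl : α₂ = σ₂.character := funext hα₂σ
  have hinj : Function.Injective ρ := by
    rw [injective_iff_map_eq_one]
    intro g hg
    have : g ∈ charKer ρ.character := by
      change ρ.character g = ρ.character 1
      rw [Representation.character, Representation.character, hg, map_one ρ]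
    rw [hχfaithful] at this
    exact this
  have hd : d ≠ 1 := by
    rintro rfl
    have h := hprod 1
    simp only [Representation.char_one, Module.finrank_fin_fun, Complex.conj_natCast] at h
    have h' : 1 * 1 = 1 + m₁ * n₁ + m₂ * n₂ := by exact_mod_cast h
    have := Nat.mul_pos hm₁ (dim_pos σ₁ hσ₁)
    omega
  obtain ⟨y, hy⟩ := center_ne_top ρ hρ hd
  have : Nontrivial (G ⧸ Subgroup.center G) :=
    ⟨⟨y, 1, fun h => hy ((QuotientGroup.eq_one_iff y).1 h)⟩⟩
  obtain ⟨⟨q, hq⟩, hq1⟩ := Subgroup.ne_bot_iff_exists_ne_one.1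
    (Group.IsNilpotent.center_ne_bot (G := G ⧸ Subgroup.center G))
  replace hq1 : q ≠ 1 := fun h => hq1 (Subtype.ext h)
  obtain ⟨x, rfl⟩ := QuotientGroup.mk_surjective q
  have hxZ : x ∉ Subgroup.center G := fun h => hq1 ((QuotientGroup.eq_one_iff x).2 h)
  have hx : ∀ g, g * x * g⁻¹ * x⁻¹ ∈ Subgroup.center G := fun g => by
    rw [← QuotientGroup.eq_one_iff]
    have := Subgroup.mem_center_iff.1 hq (g : G ⧸ Subgroup.center G)
    simp only [QuotientGroup.mk_mul, QuotientGroup.mk_inv]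
    rw [this]; group
  obtain ⟨h1, h2, rfl, ε, hε, hpm, g₀, hg₀⟩ := second_center_analysis ρ σ₁ σ₂ m₁ m₂ hρ hσ₁ hσ₂
    hm₁ hm₂ hinj hprod x hxZ hx
  refine ⟨h1, h2, by simp, quotient_dihedral (by simp) ρ hinj x ε hε hpm g₀ hg₀⟩

end ACFew
end
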